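/- Let S be a dense subsemigroup of (ℍ, +) such that S ∩ (B(1) \ {0}) is a subsemigroup of (B(1) \ {0}, ·). Let ⟨xₙ⟩ₙ₌₁^∞ be a sequence in S such that ∑ₙ₌₁^∞ xₙ converges to 0, and let A be an IP* set near 0 in S. Then there exists a sum subsystem ⟨yₙ⟩ₙ₌₁^∞ of ⟨xₙ⟩ₙ₌₁^∞ such that FS(⟨yₙ⟩ₙ₌₁^∞) ∪ FP(⟨yₙ⟩ₙ₌₁^∞) ⊆ A, where FP(⟨yₙ⟩ₙ₌₁^∞) is the set of all products of finitely many distinct terms of the sequence taken in any order without repetition. -/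

import Mathlib

open Filter Topology

/-- Finite sums of distinct terms of a sequence of quaternions. -/
def FS (x : ℕ → Quaternion ℝ) : Set (Quaternion ℝ) :=
  {a | ∃ H : Finset ℕ, H.Nonempty ∧ a = ∑ t ∈ H, x t}

/-- Finite products, in any order without repetition, of terms of a sequence of
quaternions: products `x_{n₁} ⋯ x_{n_k}` with `k ≥ 1` and distinct indices. -/
def FPany (x : ℕ → Quaternion ℝ) : Set (Quaternion ℝ) :=
  {a | ∃ l : List ℕ, l ≠ [] ∧ l.Nodup ∧ a = (l.map x).prod}

/-- The series `∑ₙ xₙ` converges (its partial sums converge). -/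
def SeriesConverges (x : ℕ → Quaternion ℝ) : Prop :=
  ∃ L : Quaternion ℝ, Tendsto (fun N => ∑ n ∈ Finset.range N, x n) atTop (𝓝 L)

/-- `A` is an IP set near 0 in `S`. -/
def IPNearZero (S A : Set (Quaternion ℝ)) : Prop :=
  ∃ z : ℕ → Quaternion ℝ, (∀ n, z n ∈ S) ∧ SeriesConverges z ∧ FS z ⊆ A

/-- `D` is an IP* set near 0 in `S`. -/
def IPStarNearZero (S D : Set (Quaternion ℝ)) : Prop :=
  ∀ C ⊆ S, IPNearZero S C → IPNearZero S (C ∩ D)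

/-- `y` is a sum subsystem of `x`. -/
def SumSubsystem (y x : ℕ → Quaternion ℝ) : Prop :=
  ∃ H : ℕ → Finset ℕ, (∀ n, (H n).Nonempty) ∧
    (∀ n, ∀ i ∈ H n, ∀ j ∈ H (n + 1), i < j) ∧
    (∀ n, y n = ∑ t ∈ H n, x t)

def UIdem {M : Type*} [Add M] (U : Ultrafilter M) : Prop :=
  ∀ p : M → Prop, (∀ᶠ m in (U : Filter M), p m) →
    ∀ᶠ m in (U : Filter M), ∀ᶠ m' in (U : Filter M), p (m + m')

lemma UIdem.map {M N : Type*} [Add M] [Add N] {U : Ultrafilter M} (h : UIdem U)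
    (f : M → N) (hf : ∀ a b, f (a + b) = f a + f b) : UIdem (U.map f) := by
  intro p hp
  rw [Ultrafilter.coe_map, eventually_map] at *
  filter_upwards [h _ hp] with a ha
  rw [eventually_map]
  filter_upwards [ha] with b hb
  rwa [← hf]

lemma exists_seq_local {M : Type*} [Inhabited M] (T : ℕ → (ℕ → M) → Set M)
    (hT : ∀ n v, (T n v).Nonempty)
    (hloc : ∀ n v w, (∀ i < n, v i = w i) → T n v = T n w) :
    ∃ y : ℕ → M, ∀ n, y n ∈ T n y := by
  classical
  choose c hc using hT
  let F : ∀ n, (∀ i, i < n → M) → M :=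
    fun n g => c n (fun i => if h : i < n then g i h else default)
  let y : ℕ → M := fun n => WellFounded.fix Nat.lt_wfRel.wf F n
  refine ⟨y, fun n => ?_⟩
  have e : y n = F n (fun i _ => y i) := WellFounded.fix_eq Nat.lt_wfRel.wf F n
  rw [e, hloc n y (fun i => if i < n then y i else default) (fun i hi => by simp [hi])]
  have := hc n (fun i => if i < n then y i else default)
  simpa [F] using this

lemma exists_seq_FS {M : Type*} [AddCommMonoid M] (U : Ultrafilter M) (hU : UIdem U)
    (B : Set M) (hB : B ∈ U) (T : ℕ → (ℕ → M) → Set M) (hT : ∀ n v, T n v ∈ U)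
    (hloc : ∀ n v w, (∀ i < n, v i = w i) → T n v = T n w) :
    ∃ y : ℕ → M, (∀ n, y n ∈ T n y) ∧
      ∀ H : Finset ℕ, H.Nonempty → ∑ t ∈ H, y t ∈ B := by
  classical
  haveI : Inhabited M := ⟨0⟩
  let B' : Set M := {m | m ∈ B ∧ ∀ᶠ m' in (U : Filter M), m + m' ∈ B}
  have hB' : ∀ᶠ m in (U : Filter M), m ∈ B' := by
    have h1 : ∀ᶠ m in (U : Filter M), m ∈ B := hB
    filter_upwards [h1, hU _ h1] with m a b using ⟨a, b⟩
  have hs : ∀ m ∈ B', ∀ᶠ m' in (U : Filter M), m + m' ∈ B' := by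
    rintro m ⟨_, h2⟩
    filter_upwards [h2, hU _ h2] with a ha hb
    refine ⟨ha, ?_⟩
    filter_upwards [hb] with b hb
    rwa [add_assoc]
  let T' : ℕ → (ℕ → M) → Set M := fun n v =>
    {t | t ∈ T n v ∧ t ∈ B' ∧ ∀ H ∈ (Finset.range n).powerset,
      ∑ i ∈ H, v i ∈ B' → ∑ i ∈ H, v i + t ∈ B'}
  have hT' : ∀ n v, T' n v ∈ (U : Filter M) := by
    intro n v
    have h3 : ∀ᶠ t in (U : Filter M), ∀ H ∈ (Finset.range n).powerset,
      ∑ i ∈ H, v i ∈ B' → ∑ i ∈ H, v i + t ∈ B' := by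
      rw [Filter.eventually_all_finset]
      intro H _
      by_cases h : ∑ i ∈ H, v i ∈ B'
      · filter_upwards [hs _ h] with a ha _ using ha
      · exact Eventually.of_forall fun a h' => absurd h' h
    filter_upwards [hT n v, hB', h3] with t a b c using ⟨a, b, c⟩
  obtain ⟨y, hy⟩ := exists_seq_local T' (fun n v => U.nonempty_of_mem (hT' n v)) (by
    intro n v w hvw
    have : ∀ H ∈ (Finset.range n).powerset, ∑ i ∈ H, v i = ∑ i ∈ H, w i := by
      intro H hH
      refine Finset.sum_congr rfl fun i hi => hvw i ?_
      exact Finset.mem_range.1 (Finset.mem_powerset.1 hH hi)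
    ext t
    simp only [T', Set.mem_ofPred_eq, hloc n v w hvw]
    refine and_congr_right fun _ => and_congr_right fun _ => ?_
    refine forall₂_congr fun H hH => ?_
    rw [this H hH])
  refine ⟨y, fun n => (hy n).1, ?_⟩
  have key : ∀ n, ∀ H : Finset ℕ, H ⊆ Finset.range n → H.Nonempty → ∑ t ∈ H, y t ∈ B' := by
    intro n
    induction n with
    | zero => intro H h1 h2; simp at h1; simp [h1] at h2
    | succ n ih =>
      intro H h1 h2
      have hsub : H.erase n ⊆ Finset.range n := by
        intro i hi
        have := h1 (Finset.mem_of_mem_erase hi)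
        have := Finset.ne_of_mem_erase hi
        simp at *; omega
      by_cases hn : n ∈ H
      · rw [← Finset.sum_erase_add _ _ hn]
        rcases (H.erase n).eq_empty_or_nonempty with h | h
        · rw [h]; simpa using (hy n).2.1
        · exact (hy n).2.2 _ (Finset.mem_powerset.2 hsub) (ih _ hsub h)
      · rw [Finset.erase_eq_of_notMem hn] at hsub
        exact ih H hsub h2
  intro H hH
  refine (key (H.sup id + 1) H ?_ hH).1
  intro i hi
  have : i ≤ H.sup id := Finset.le_sup (f := id) hi
  simp; omega

lemma mem_of_idem (S A : Set (Quaternion ℝ)) (hA : IPStarNearZero S A)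
    (q : Ultrafilter (Quaternion ℝ)) (hq : UIdem q) (hS : S ∈ q)
    (h0 : (q : Filter (Quaternion ℝ)) ≤ 𝓝 0) : A ∈ q := by
  by_contra hAq
  have hB : S ∩ Aᶜ ∈ q := inter_mem hS (Ultrafilter.compl_mem_iff_notMem.2 hAq)
  obtain ⟨z, hz, hF⟩ := exists_seq_FS q hq _ hB
    (fun n _ => Metric.ball 0 ((1 / 2 : ℝ) ^ n))
    (fun n _ => h0 (Metric.ball_mem_nhds _ (by positivity))) (fun _ _ _ _ => rfl)
  have hFS : FS z ⊆ S ∩ Aᶜ := by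
    rintro a ⟨H, hH, rfl⟩
    exact hF H hH
  have hsum : Summable z := by
    refine Summable.of_norm_bounded (g := fun n => (1 / 2 : ℝ) ^ n) summable_geometric_two ?_
    intro n
    have := hz n
    simp only [mem_ball_zero_iff] at this
    exact this.le
  have hip : IPNearZero S (FS z) := by
    refine ⟨z, fun n => ?_, ⟨_, hsum.hasSum.tendsto_sum_nat⟩, subset_rfl⟩
    have := (hF {n} (by simp)).1
    simpa using this
  obtain ⟨w, -, -, hw⟩ := hA (FS z) (fun a ha => (hFS ha).1) hip
  have := hw ⟨{0}, by simp, rfl⟩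
  exact (hFS this.1).2 this.2

def EE (n : ℕ) : Set (ℕ →₀ ℕ) := {m | m ≠ 0 ∧ ∀ i, m i ≤ 1 ∧ (i < n → m i = 0)}

attribute [local instance] Ultrafilter.add Ultrafilter.addSemigroup in
lemma exists_UU : ∃ U : Ultrafilter (ℕ →₀ ℕ), UIdem U ∧ ∀ n, EE n ∈ U := by
  let S : Set (Ultrafilter (ℕ →₀ ℕ)) := ⋂ n, {U | EE n ∈ U}
  have h := exists_idempotent_in_compact_add_subsemigroup ?_ S ?_ ?_ ?_
  · rcases h with ⟨U, hU, U_idem⟩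
    refine ⟨U, ?_, fun n => Set.mem_iInter.mp hU n⟩
    intro p hp
    rw [← U_idem] at hp
    exact (Ultrafilter.eventually_add U U p).1 hp
  · exact Ultrafilter.continuous_add_left
  · apply IsCompact.nonempty_iInter_of_sequence_nonempty_isCompact_isClosed
    · intro n U hU
      refine mem_of_superset hU ?_
      rintro m ⟨h1, h2⟩
      exact ⟨h1, fun i => ⟨(h2 i).1, fun hi => (h2 i).2 (by omega)⟩⟩
    · intro n
      refine ⟨pure (Finsupp.single n 1), ?_⟩
      show Finsupp.single n 1 ∈ EE n
      refine ⟨by simp, fun i => ?_⟩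
      by_cases hi : n = i
      · subst hi; simp
      · simp [Finsupp.single_apply, hi]
    · exact (ultrafilter_isClosed_basic _).isCompact
    · intro n
      apply ultrafilter_isClosed_basic
  · exact IsClosed.isCompact (isClosed_iInter fun i => ultrafilter_isClosed_basic _)
  · intro U hU V hV
    rw [Set.mem_iInter] at *
    intro n
    show ∀ᶠ m in ((U + V : Ultrafilter (ℕ →₀ ℕ)) : Filter (ℕ →₀ ℕ)), m ∈ EE n
    rw [Ultrafilter.eventually_add]
    have hUn : EE n ∈ U := hU n
    filter_upwards [hUn] with m hm
    have hVn : EE (n + (m.support.sup id + 1)) ∈ V := hV _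
    filter_upwards [hVn] with m' hm'
    refine ⟨?_, fun i => ?_⟩
    · intro h
      apply hm.1
      ext i
      have := DFunLike.congr_fun h i
      simp at this
      simp [this.1]
    · have h1 := hm.2 i
      have h2 := hm'.2 i
      by_cases hi : m i = 0
      · simp only [Finsupp.add_apply, hi, zero_add]
        exact ⟨h2.1, fun h => h2.2 (by omega)⟩
      · have : i ≤ m.support.sup id :=
          Finset.le_sup (f := id) (Finsupp.mem_support_iff.2 hi)
        have h3 := h2.2 (by omega)
        simp only [Finsupp.add_apply, h3, add_zero]
        exact h1

lemma finite_lists (n : ℕ) : {l : List ℕ | l.Nodup ∧ ∀ i ∈ l, i < n}.Finite := by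
  refine ((List.finite_length_le (Fin n) n).image (List.map Fin.val)).subset ?_
  rintro l ⟨h1, h2⟩
  refine ⟨l.pmap (fun i hi => ⟨i, hi⟩) h2, ?_, ?_⟩
  · simp only [Set.mem_ofPred_eq, List.length_pmap]
    have := (h1.subperm (l₂ := List.range n) (fun i hi => List.mem_range.2 (h2 i hi))).length_le
    simpa using this
  · simp [List.map_pmap]

noncomputable def phi (x : ℕ → Quaternion ℝ) (m : ℕ →₀ ℕ) : Quaternion ℝ := m.sum fun i k => k • x i

lemma phi_add (x : ℕ → Quaternion ℝ) (a b : ℕ →₀ ℕ) : phi x (a + b) = phi x a + phi x b :=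
  Finsupp.sum_add_index' (by simp) (by intros; rw [add_smul])

lemma phi_sum (x : ℕ → Quaternion ℝ) (y : ℕ → ℕ →₀ ℕ) (H : Finset ℕ) :
    phi x (∑ t ∈ H, y t) = ∑ t ∈ H, phi x (y t) :=
  map_sum (AddMonoidHom.mk' (phi x) (phi_add x)) y H

lemma phi_EE (x : ℕ → Quaternion ℝ) (n : ℕ) (m : ℕ →₀ ℕ) (hm : m ∈ EE n) :
    phi x m = ∑ i ∈ m.support, x i := by
  refine Finset.sum_congr rfl fun i hi => ?_
  have : m i = 1 := by
    have := (hm.2 i).1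
    have := Finsupp.mem_support_iff.1 hi
    omega
  simp [this]

lemma phi_norm (x : ℕ → Quaternion ℝ) (hx : ∀ n, ‖x n‖ ≤ (1 / 2 : ℝ) ^ n)
    (n : ℕ) (m : ℕ →₀ ℕ) (hm : m ∈ EE n) : ‖phi x m‖ ≤ 2 * (1 / 2 : ℝ) ^ n := by
  rw [phi_EE x n m hm]
  have hle : ∀ i ∈ m.support, n ≤ i := by
    intro i hi
    by_contra h
    exact Finsupp.mem_support_iff.1 hi ((hm.2 i).2 (by omega))
  calc ‖∑ i ∈ m.support, x i‖ ≤ ∑ i ∈ m.support, (1 / 2 : ℝ) ^ i :=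
        norm_sum_le_of_le _ fun i _ => hx i
    _ ≤ ∑ i ∈ Finset.Ico n (m.support.sup id + 1), (1 / 2 : ℝ) ^ i := by
        refine Finset.sum_le_sum_of_subset_of_nonneg ?_ (fun _ _ _ => by positivity)
        intro i hi
        have : i ≤ m.support.sup id := Finset.le_sup (f := id) hi
        have := hle i hi
        simp; omega
    _ = ∑ j ∈ Finset.range (m.support.sup id + 1 - n), (1 / 2 : ℝ) ^ n * (1 / 2 : ℝ) ^ j := by
        rw [Finset.sum_Ico_eq_sum_range]
        exact Finset.sum_congr rfl fun j _ => pow_add _ _ _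
    _ ≤ 2 * (1 / 2 : ℝ) ^ n := by
        rw [← Finset.mul_sum, mul_comm]
        gcongr
        exact sum_geometric_two_le _

lemma main_small (S : Set (Quaternion ℝ))
    (hSadd : ∀ a ∈ S, ∀ b ∈ S, a + b ∈ S)
    (hSmul : ∀ a ∈ S ∩ (Metric.ball 0 1 \ {0}), ∀ b ∈ S ∩ (Metric.ball 0 1 \ {0}),
      a * b ∈ S ∩ (Metric.ball 0 1 \ {0}))
    (x : ℕ → Quaternion ℝ) (hxS : ∀ n, x n ∈ S) (hx : ∀ n, ‖x n‖ ≤ (1 / 2 : ℝ) ^ n)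
    (A : Set (Quaternion ℝ)) (hAS : A ⊆ S) (hA : IPStarNearZero S A) :
    ∃ y : ℕ → Quaternion ℝ, SumSubsystem y x ∧ FS y ∪ FPany y ⊆ A := by
  obtain ⟨U, hU, hE⟩ := exists_UU
  set q := U.map (phi x) with hqdef
  have hq : UIdem q := hU.map _ (phi_add x)
  have hS : S ∈ q := by
    rw [hqdef, Ultrafilter.mem_map]
    refine mem_of_superset (hE 0) fun m hm => ?_
    show phi x m ∈ S
    rw [phi_EE x 0 m hm]
    exact Finset.sum_induction_nonempty _ (· ∈ S) (fun a b ha hb => hSadd a ha b hb)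
      (Finsupp.support_nonempty_iff.2 hm.1) (fun i _ => hxS i)
  have h0 : (q : Filter (Quaternion ℝ)) ≤ 𝓝 0 := by
    rw [Metric.nhds_basis_ball.ge_iff]
    intro ε hε
    obtain ⟨n, hn⟩ := exists_pow_lt_of_lt_one (show 0 < ε / 2 by positivity)
      (show (1 / 2 : ℝ) < 1 by norm_num)
    show Metric.ball 0 ε ∈ q
    rw [hqdef, Ultrafilter.mem_map]
    refine mem_of_superset (hE n) fun m hm => ?_
    show phi x m ∈ Metric.ball 0 ε
    rw [mem_ball_zero_iff]
    have := phi_norm x hx n m hm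
    linarith
  have hAq : A ∈ q := mem_of_idem S A hA q hq hS h0
  -- separation sets
  let T0 : ℕ → (ℕ → ℕ →₀ ℕ) → Set (ℕ →₀ ℕ) := fun n v =>
    {m | m ∈ EE 0 ∧ ∀ i ∈ Finset.range n, ∀ j ∈ (v i).support, ∀ k ∈ m.support, j < k}
  have hT0 : ∀ n v, T0 n v ∈ U := by
    intro n v
    have : ∀ᶠ m in (U : Filter (ℕ →₀ ℕ)), ∀ i ∈ Finset.range n,
        ∀ j ∈ (v i).support, ∀ k ∈ m.support, j < k := by
      rw [Filter.eventually_all_finset]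
      intro i _
      filter_upwards [hE ((v i).support.sup id + 1)] with m hm j hj k hk
      have h1 : j ≤ (v i).support.sup id := Finset.le_sup (f := id) hj
      by_contra h
      exact Finsupp.mem_support_iff.1 hk ((hm.2 k).2 (by omega))
    filter_upwards [hE 0, this] with m a b using ⟨a, b⟩
  have hT0loc : ∀ n v w, (∀ i < n, v i = w i) → T0 n v = T0 n w := by
    intro n v w h
    ext m
    simp only [T0, Set.mem_ofPred_eq]
    refine and_congr_right fun _ => forall₂_congr fun i hi => ?_
    rw [h i (Finset.mem_range.1 hi)]
  have hsub : ∀ y : ℕ → ℕ →₀ ℕ, (∀ n, y n ∈ T0 n y) → SumSubsystem (fun n => phi x (y n)) x := by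
    intro y hy
    refine ⟨fun n => (y n).support, fun n => Finsupp.support_nonempty_iff.2 (hy n).1.1, ?_, ?_⟩
    · intro n i hi j hj
      exact (hy (n + 1)).2 n (by simp) i hi j hj
    · intro n
      exact phi_EE x 0 _ (hy n).1
  by_cases hz : {0} ∈ q
  · have h0A : (0 : Quaternion ℝ) ∈ A := by
      obtain ⟨a, ha, rfl⟩ := q.nonempty_of_mem (inter_mem hAq hz)
      exact ha
    obtain ⟨y, hy, hF⟩ := exists_seq_FS U hU (phi x ⁻¹' {0}) (Ultrafilter.mem_map.1 hz) T0 hT0 hT0loc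
    refine ⟨_, hsub y hy, ?_⟩
    rintro a (⟨H, hH, rfl⟩ | ⟨l, hl, -, rfl⟩)
    · rw [← phi_sum]
      have : phi x (∑ t ∈ H, y t) = 0 := hF H hH
      rwa [this]
    · have h1 : ∀ n, phi x (y n) = 0 := fun n => by simpa using hF {n} (by simp)
      have : (l.map fun n => phi x (y n)).prod = 0 := by
        apply List.prod_eq_zero
        obtain ⟨i, hi⟩ := List.exists_mem_of_ne_nil l hl
        exact List.mem_map.2 ⟨i, hi, h1 i⟩
      rwa [this]
  · set G : Set (Quaternion ℝ) := S ∩ (Metric.ball 0 1 \ {0}) with hG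
    have hGq : G ∈ q := inter_mem hS
      (inter_mem (h0 (Metric.ball_mem_nhds _ one_pos)) (Ultrafilter.compl_mem_iff_notMem.2 hz))
    have hGl : ∀ a, (a = 1 ∨ a ∈ G) → ∀ t ∈ G, a * t ∈ G := by
      rintro a (rfl | ha) t ht
      · simpa using ht
      · exact hSmul a ha t ht
    have hGr : ∀ a, (a = 1 ∨ a ∈ G) → ∀ t ∈ G, t * a ∈ G := by
      rintro a (rfl | ha) t ht
      · simpa using ht
      · exact hSmul t ht a ha
    have hmul : ∀ a b, (a = 1 ∨ a ∈ G) → (b = 1 ∨ b ∈ G) →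
        ∀ᶠ t in (q : Filter (Quaternion ℝ)), a * t * b ∈ A := by
      intro a b ha hb
      refine mem_of_idem S A hA (q.map fun t => a * t * b)
        (hq.map _ fun s t => by rw [mul_add, add_mul]) ?_ ?_
      · rw [Ultrafilter.mem_map]
        exact mem_of_superset hGq fun t ht => (hGr b hb _ (hGl a ha t ht)).1
      · rw [Ultrafilter.coe_map]
        have hc : Tendsto (fun t : Quaternion ℝ => a * t * b) (𝓝 0) (𝓝 (a * 0 * b)) :=
          Continuous.tendsto (by fun_prop) 0
        simp only [mul_zero, zero_mul] at hc
        exact hc.mono_left h0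
    let L : ℕ → Set (List ℕ) := fun n => {l : List ℕ | l.Nodup ∧ ∀ i ∈ l, i < n}
    let P : (ℕ → ℕ →₀ ℕ) → List ℕ → Quaternion ℝ := fun v l =>
      (l.map fun i => phi x (v i)).prod
    let T1 : ℕ → (ℕ → ℕ →₀ ℕ) → Set (ℕ →₀ ℕ) := fun n v =>
      {m | ∀ c ∈ L n ×ˢ L n, (P v c.1 = 1 ∨ P v c.1 ∈ G) → (P v c.2 = 1 ∨ P v c.2 ∈ G) →
        P v c.1 * phi x m * P v c.2 ∈ A}
    have hT1 : ∀ n v, T1 n v ∈ (U : Filter (ℕ →₀ ℕ)) := by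
      intro n v
      have : ∀ᶠ m in (U : Filter (ℕ →₀ ℕ)), ∀ c ∈ L n ×ˢ L n,
          (P v c.1 = 1 ∨ P v c.1 ∈ G) → (P v c.2 = 1 ∨ P v c.2 ∈ G) →
          P v c.1 * phi x m * P v c.2 ∈ A := by
        rw [Filter.eventually_all_finite ((finite_lists n).prod (finite_lists n))]
        intro c _
        by_cases h1 : P v c.1 = 1 ∨ P v c.1 ∈ G
        · by_cases h2 : P v c.2 = 1 ∨ P v c.2 ∈ G
          · have := hmul _ _ h1 h2
            rw [hqdef, Ultrafilter.coe_map, eventually_map] at this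
            filter_upwards [this] with m hm _ _ using hm
          · exact Eventually.of_forall fun m _ h => absurd h h2
        · exact Eventually.of_forall fun m h => absurd h h1
      exact this
    have hT1loc : ∀ n v w, (∀ i < n, v i = w i) → T1 n v = T1 n w := by
      intro n v w h
      have hP : ∀ l ∈ L n, P v l = P w l := by
        intro l hl
        simp only [P]
        congr 1
        exact List.map_congr_left fun i hi => by rw [h i (hl.2 i hi)]
      ext m
      simp only [T1, Set.mem_ofPred_eq]
      refine forall₂_congr fun c hc => ?_
      rw [hP _ hc.1, hP _ hc.2]
    obtain ⟨y, hy, hF⟩ := exists_seq_FS U hU (phi x ⁻¹' (A ∩ G))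
      (Ultrafilter.mem_map.1 (inter_mem hAq hGq)) (fun n v => T0 n v ∩ T1 n v)
      (fun n v => inter_mem (hT0 n v) (hT1 n v))
      (fun n v w h => by simp only [hT0loc n v w h, hT1loc n v w h])
    refine ⟨_, hsub y fun n => (hy n).1, ?_⟩
    have hyG : ∀ n, phi x (y n) ∈ G := fun n => by
      have : phi x (∑ t ∈ {n}, y t) ∈ A ∩ G := hF {n} (by simp)
      simpa using this.2
    have hPG : ∀ l, P y l = 1 ∨ P y l ∈ G := by
      intro l
      induction l with
      | nil => left; simp [P]
      | cons i l ih =>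
        right
        have := hGr _ ih _ (hyG i)
        simpa [P] using this
    rintro a (⟨H, hH, rfl⟩ | ⟨l, hl, hnd, rfl⟩)
    · rw [← phi_sum]
      exact (hF H hH).1
    · have hne : l.toFinset.Nonempty := by simpa using hl
      obtain ⟨k, hk, hmax⟩ := l.toFinset.exists_max_image id hne
      obtain ⟨l1, l2, rfl⟩ := List.append_of_mem (List.mem_toFinset.1 hk)
      rw [List.nodup_append] at hnd
      obtain ⟨n1, n2, n3⟩ := hnd
      rw [List.nodup_cons] at n2
      have e1 : l1 ∈ L k := ⟨n1, fun i hi => lt_of_le_of_ne (hmax i (by simp [hi]))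
        (n3 i hi k (by simp))⟩
      have e2 : l2 ∈ L k := ⟨n2.2, fun i hi => lt_of_le_of_ne (hmax i (by simp [hi]))
        (fun h => n2.1 (h ▸ hi))⟩
      have := (hy k).2 (l1, l2) ⟨e1, e2⟩ (hPG _) (hPG _)
      simpa [P, mul_assoc] using this

/-- Let `S` be a dense subsemigroup of `(ℍ, +)` such that
`S ∩ (B(1) \ {0})` is a subsemigroup of `(B(1) \ {0}, ·)`.  Let `⟨xₙ⟩` be a sequence in
`S` with `∑ₙ xₙ` converging to `0`, and let `A ⊆ S` be an IP* set near 0.  Then there is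
a sum subsystem `⟨yₙ⟩` of `⟨xₙ⟩` with `FS(⟨yₙ⟩) ∪ FP(⟨yₙ⟩) ⊆ A`, where `FP` allows
products of distinct terms in any order. -/
theorem ipstar_near_zero_sum_subsystem (S : Set (Quaternion ℝ))
    (hSdense : Dense S)
    (hSadd : ∀ a ∈ S, ∀ b ∈ S, a + b ∈ S)
    (hSmul : ∀ a ∈ S ∩ (Metric.ball 0 1 \ {0}), ∀ b ∈ S ∩ (Metric.ball 0 1 \ {0}),
      a * b ∈ S ∩ (Metric.ball 0 1 \ {0}))
    (x : ℕ → Quaternion ℝ) (hxS : ∀ n, x n ∈ S)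
    (hx0 : Tendsto (fun N => ∑ n ∈ Finset.range N, x n) atTop (𝓝 0))
    (A : Set (Quaternion ℝ)) (hAS : A ⊆ S) (hA : IPStarNearZero S A) :
    ∃ y : ℕ → Quaternion ℝ, SumSubsystem y x ∧ FS y ∪ FPany y ⊆ A := by
  have hlim : Tendsto x atTop (𝓝 0) := by
    have h1 := (hx0.comp (tendsto_add_atTop_nat 1)).sub hx0
    simpa [Function.comp_def, Finset.sum_range_succ] using h1
  obtain ⟨k, hk, hkx⟩ := Filter.extraction_forall_of_eventually
    (P := fun n i => ‖x i‖ ≤ (1 / 2 : ℝ) ^ n) (fun n => by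
      have := hlim (Metric.ball_mem_nhds 0 (show (0 : ℝ) < (1 / 2 : ℝ) ^ n by positivity))
      rw [Filter.mem_map] at this
      filter_upwards [this] with i hi
      have hi' : x i ∈ Metric.ball 0 ((1 / 2 : ℝ) ^ n) := hi
      rw [mem_ball_zero_iff] at hi'
      exact hi'.le)
  obtain ⟨y, ⟨H, h1, h2, h3⟩, hy⟩ := main_small S hSadd hSmul (x ∘ k) (fun n => hxS _) hkx A hAS hA
  refine ⟨y, ⟨fun n => (H n).map ⟨k, hk.injective⟩, fun n => (h1 n).map, ?_, ?_⟩, hy⟩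
  · intro n i hi j hj
    simp only [Finset.mem_map, Function.Embedding.coeFn_mk] at hi hj
    obtain ⟨i, hi, rfl⟩ := hi
    obtain ⟨j, hj, rfl⟩ := hj
    exact hk (h2 n i hi j hj)
  · intro n
    simpa using h3 n
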